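/- Fix a natural number k, a type α, and pairwise disjoint, finite, nonempty sub-alphabets σ₁, …, σ_k ⊆ α. Let C₁ and C₂ be arc sets on {1, …, k} that are well-nested matchings, and let L(C₁) and L(C₂) be the corresponding block-counting languages over (σ₁, …, σ_k). Then L(C₁) ∩ L(C₂) is context-free if and only if C₁ and C₂ are jointly well-nested. -/

import Mathlib

/-- Two arcs cross: `i < i' < j < j'` or `i' < i < j' < j`. -/
def ArcsCross {k : ℕ} (e₁ e₂ : Fin k × Fin k) : Prop :=
  (e₁.1 < e₂.1 ∧ e₂.1 < e₁.2 ∧ e₁.2 < e₂.2) ∨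
  (e₂.1 < e₁.1 ∧ e₁.1 < e₂.2 ∧ e₂.2 < e₁.2)

/-- An arc set on `{1, …, k}`: every arc `(i, j)` satisfies `i < j`. -/
def IsArcSet {k : ℕ} (C : Set (Fin k × Fin k)) : Prop :=
  ∀ e ∈ C, e.1 < e.2

/-- An arc set is well-nested if no two of its arcs cross. -/
def WellNested {k : ℕ} (C : Set (Fin k × Fin k)) : Prop :=
  ∀ e₁ ∈ C, ∀ e₂ ∈ C, ¬ ArcsCross e₁ e₂

/-- An arc set is a matching if no two distinct arcs share an endpoint. -/
def IsMatching {k : ℕ} (C : Set (Fin k × Fin k)) : Prop :=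
  ∀ e₁ ∈ C, ∀ e₂ ∈ C, e₁ ≠ e₂ →
    ({e₁.1, e₁.2} : Set (Fin k)) ∩ {e₂.1, e₂.2} = ∅

/-- Joint well-nestedness of two arc sets: each is well-nested, no arc of one crosses an arc of
the other, and no two *distinct* arcs (one from each set) share an endpoint. -/
def JointlyWellNested {k : ℕ} (C₁ C₂ : Set (Fin k × Fin k)) : Prop :=
  WellNested C₁ ∧ WellNested C₂ ∧
  (∀ e₁ ∈ C₁, ∀ e₂ ∈ C₂, ¬ ArcsCross e₁ e₂) ∧
  (∀ e₁ ∈ C₁, ∀ e₂ ∈ C₂, e₁ ≠ e₂ →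
    ({e₁.1, e₁.2} : Set (Fin k)) ∩ {e₂.1, e₂.2} = ∅)

/-- The block-counting language over the sub-alphabets `σ 0, …, σ (k-1)` with arc set `C`:
all words that decompose as `B₁B₂⋯B_k` with each block `B_i` over `σ i` and with
`|B_i| = |B_j|` for every arc `(i, j) ∈ C`. -/
def blockLang {α : Type} {k : ℕ} (σ : Fin k → Set α) (C : Set (Fin k × Fin k)) : Language α :=
  { w | ∃ B : Fin k → List α,
      w = (List.ofFn B).flatten ∧
      (∀ i : Fin k, ∀ x ∈ B i, x ∈ σ i) ∧
      (∀ e ∈ C, (B e.1).length = (B e.2).length) }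

/-!
Since the sub-alphabets are disjoint, `L(C₁) ∩ L(C₂) = L(C₁ ∪ C₂)`, so it suffices to show that, for
a single arc set `C`, the language `L(C)` is context-free if and only if `C` is a well-nested
matching.

If `C` is one, read the indices from left to right: an index without an arc contributes a factor
`σ_i*`, and an arc `(i, j)` contributes the language of the indices strictly between `i` and `j`,
nested between words over `σ_i` and `σ_j` of equal length.

Conversely, if two arcs cross or share an endpoint, there is a nonempty set `S` of indices, closed
under following arcs, such that every `l ∈ S` is linked by arcs to indices on both sides of some
`q ∈ S`. In a word whose blocks in `S` are long and whose other blocks are empty, pumping down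
deletes letters from some block `l ∈ S`, hence equally many from the blocks linked to it. So the
pumped window contains letters on both sides of a block `q ∈ S`, and it is too short for that.
-/

section ContextFree

variable {T : Type*} {N N' : Type*}

/-- The language denoted by the sentential form `s` when every nonterminal `A` stands for the
language `L A`. -/
def sententialLang (L : N → Language T) : List (Symbol T N) → Language T
  | [] => 1
  | .terminal a :: s => {[a]} * sententialLang L s
  | .nonterminal A :: s => L A * sententialLang L s

theorem sententialLang_append (L : N → Language T) (s t : List (Symbol T N)) :
    sententialLang L (s ++ t) = sententialLang L s * sententialLang L t := by
  induction s with
  | nil => simp [sententialLang]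
  | cons a s ih => cases a <;> simp [sententialLang, ih, mul_assoc]

theorem sententialLang_mono {L L' : N → Language T} (h : L ≤ L') (s : List (Symbol T N)) :
    sententialLang L s ≤ sententialLang L' s := by
  induction s with
  | nil => rfl
  | cons a s ih =>
    cases a with
    | terminal a => exact mul_le_mul_right ih _
    | nonterminal A => exact mul_le_mul' (h A) ih

theorem mem_sententialLang_map_terminal (L : N → Language T) (w : List T) :
    w ∈ sententialLang L (w.map .terminal) := by
  induction w with
  | nil => exact Language.nil_mem_one
  | cons a w ih => exact Language.append_mem_mul (Set.mem_singleton [a]) ih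

/-- Renaming of the nonterminals along `f`. -/
def mapNonterminal (f : N → N') : Symbol T N → Symbol T N'
  | .terminal a => .terminal a
  | .nonterminal A => .nonterminal (f A)

theorem sententialLang_mapNonterminal (f : N → N') (L : N' → Language T) (s : List (Symbol T N)) :
    sententialLang L (s.map (mapNonterminal f)) = sententialLang (L ∘ f) s := by
  induction s with
  | nil => rfl
  | cons a s ih => cases a <;> simp [sententialLang, mapNonterminal, ih]

/-- The language of all words derivable from the nonterminal `A` of `g`. -/
def derivedLang (g : ContextFreeGrammar T) (A : g.NT) : Language T :=
  {w | g.Derives [.nonterminal A] (w.map .terminal)}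

variable {g : ContextFreeGrammar T}

theorem produces_input_output {r : ContextFreeRule T g.NT} (hr : r ∈ g.rules) :
    g.Produces [.nonterminal r.input] r.output :=
  ⟨r, hr, ContextFreeRule.Rewrites.input_output⟩

theorem derives_of_mem_sententialLang {s : List (Symbol T g.NT)} {w : List T}
    (hw : w ∈ sententialLang (derivedLang g) s) : g.Derives s (w.map .terminal) := by
  induction s generalizing w with
  | nil => rw [(Language.mem_one w).1 hw]; rfl
  | cons a s ih =>
    cases a with
    | terminal a =>
      obtain ⟨_, rfl, v, hv, rfl⟩ := hw
      exact (ih hv).append_left [.terminal a]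
    | nonterminal A =>
      obtain ⟨u, hu, v, hv, rfl⟩ := hw
      simpa using (hu.append_right s).trans ((ih hv).append_left (u.map .terminal))

theorem sententialLang_output_le_derivedLang {r : ContextFreeRule T g.NT} (hr : r ∈ g.rules) :
    sententialLang (derivedLang g) r.output ≤ derivedLang g r.input :=
  fun _ hw => (produces_input_output hr).trans_derives (derives_of_mem_sententialLang hw)

/-- Rewriting by a rule can only shrink the language denoted by a sentential form. With `L A` the
words that satisfy some property, this is the induction principle for derivation trees. -/
theorem derivedLang_le {L : g.NT → Language T}
    (hL : ∀ r ∈ g.rules, sententialLang L r.output ≤ L r.input) (A : g.NT) :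
    derivedLang g A ≤ L A := by
  have anti {s t : List (Symbol T g.NT)} (h : g.Derives s t) :
      sententialLang L t ≤ sententialLang L s := by
    induction h with
    | refl => rfl
    | tail _ h ih =>
      obtain ⟨r, hr, h⟩ := h
      obtain ⟨p, q, rfl, rfl⟩ := h.exists_parts
      refine le_trans ?_ ih
      simp only [sententialLang_append, sententialLang, mul_one]
      gcongr
      exact hL r hr
  intro w hw
  simpa [sententialLang] using anti hw (mem_sententialLang_map_terminal L w)

section Equation

variable {ι : Type}

/-- The rules of the grammar for the least solution `X` of the inclusions `s ≤ X`, for `s` in `R`.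
In the forms `s`, the nonterminal `none` stands for the unknown `X`, and `some i` for the language
of `g i`. -/
def equationRules (g : ι → ContextFreeGrammar T) (R : Set (List (Symbol T (Option ι)))) :
    Set (ContextFreeRule T (Option (Σ i, (g i).NT))) :=
  (fun s => ⟨none, s.map (mapNonterminal (Option.map fun i => ⟨i, (g i).initial⟩))⟩) '' R ∪
    ⋃ i, (fun r => ⟨some ⟨i, r.input⟩, r.output.map (mapNonterminal fun A => some ⟨i, A⟩)⟩) ''
      ((g i).rules : Set (ContextFreeRule T (g i).NT))

theorem finite_equationRules [Finite ι] (g : ι → ContextFreeGrammar T)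
    {R : Set (List (Symbol T (Option ι)))} (hR : R.Finite) : (equationRules g R).Finite :=
  (hR.image _).union (Set.finite_iUnion fun i => (g i).rules.finite_toSet.image _)

theorem forall_mem_equationRules {g : ι → ContextFreeGrammar T}
    {R : Set (List (Symbol T (Option ι)))} {I : Option (Σ i, (g i).NT) → Language T} :
    (∀ r ∈ equationRules g R, sententialLang I r.output ≤ I r.input) ↔
      (∀ s ∈ R, sententialLang (I ∘ Option.map fun i => ⟨i, (g i).initial⟩) s ≤ I none) ∧
      ∀ i, ∀ r ∈ (g i).rules,
        sententialLang (fun A => I (some ⟨i, A⟩)) r.output ≤ I (some ⟨i, r.input⟩) := by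
  simp only [equationRules, Set.mem_union, Set.mem_iUnion, or_imp, forall_and,
    forall_exists_index, Set.forall_mem_image, sententialLang_mapNonterminal]
  rw [forall_comm]
  simp only [Set.forall_mem_image, Finset.mem_coe, sententialLang_mapNonterminal]
  rfl

theorem isContextFree_of_isLeast [Finite ι] {L : ι → Language T} (hL : ∀ i, (L i).IsContextFree)
    {R : Set (List (Symbol T (Option ι)))} (hR : R.Finite) {K : Language T}
    (hK : IsLeast {X | ∀ s ∈ R, sententialLang (Option.elim · X L) s ≤ X} K) :
    K.IsContextFree := by
  choose g hg using hL
  have hfin := finite_equationRules g hR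
  let G : ContextFreeGrammar T := ⟨_, none, hfin.toFinset⟩
  have closed_G := forall_mem_equationRules.1 fun r hr =>
    sententialLang_output_le_derivedLang (g := G) (hfin.mem_toFinset.2 hr)
  refine ⟨G, le_antisymm ?_ (hK.2 fun s hs => ?_)⟩
  · let I : Option (Σ i, (g i).NT) → Language T :=
      (Option.elim · K fun A => derivedLang (g A.1) A.2)
    have hI : I ∘ Option.map (fun i => ⟨i, (g i).initial⟩) = (Option.elim · K L) := by
      funext o
      cases o with
      | none => rfl
      | some i => exact hg i
    have closed_I : ∀ r ∈ equationRules g R, sententialLang I r.output ≤ I r.input :=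
      forall_mem_equationRules.2
        ⟨fun s hs => hI ▸ hK.1 s hs, fun i r hr => sententialLang_output_le_derivedLang hr⟩
    exact derivedLang_le (g := G) (L := I)
      (fun r hr => closed_I r (hfin.mem_toFinset.1 hr)) none
  · refine le_trans (sententialLang_mono ?_ s) (closed_G.1 s hs)
    rintro (_ | i)
    · exact le_rfl
    · exact (hg i).symm.trans_le (derivedLang_le (closed_G.2 i) (g i).initial)

end Equation

theorem isContextFree_mul {L M : Language T} (hL : L.IsContextFree) (hM : M.IsContextFree) :
    (L * M).IsContextFree := by
  refine isContextFree_of_isLeast (L := Bool.rec L M) (by simp [hL, hM])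
    (Set.finite_singleton [.nonterminal (some false), .nonterminal (some true)]) ?_
  simp only [Set.mem_singleton_iff, forall_eq, sententialLang, Option.elim, mul_one]
  exact isLeast_Ici

/-- The words over the alphabet `A`. -/
def wordsOver (A : Set T) : Language T :=
  {w | ∀ x ∈ w, x ∈ A}

@[simp]
theorem mem_wordsOver {A : Set T} {w : List T} : w ∈ wordsOver A ↔ ∀ x ∈ w, x ∈ A :=
  Iff.rfl

theorem isContextFree_wordsOver {A : Set T} (hA : A.Finite) : (wordsOver A).IsContextFree := by
  refine isContextFree_of_isLeast (L := Empty.elim) (by simp)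
    (R := insert [] ((fun a => [.terminal a, .nonterminal none]) '' A)) ((hA.image _).insert _) ?_
  simp only [IsLeast, lowerBounds, Set.forall_mem_insert, Set.forall_mem_image, Set.mem_ofPred_eq,
    sententialLang, Option.elim, mul_one]
  refine ⟨⟨?_, ?_⟩, ?_⟩
  · rintro _ rfl
    exact List.forall_mem_nil _
  · rintro a ha _ ⟨_, rfl, w, hw, rfl⟩
    exact List.forall_mem_cons.2 ⟨ha, hw⟩
  · rintro X ⟨h1, h2⟩ w (hw : ∀ x ∈ w, x ∈ A)
    induction w with
    | nil => exact h1 rfl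
    | cons a w ih =>
      rw [List.forall_mem_cons] at hw
      exact h2 hw.1 ⟨_, rfl, w, ih hw.2, rfl⟩

/-- The words of `L` enclosed between words over `A` and over `B` of the same length. -/
def nestLang (A B : Set T) (L : Language T) : Language T :=
  {w | ∃ u ∈ wordsOver A, ∃ x ∈ L, ∃ v ∈ wordsOver B, u.length = v.length ∧ u ++ x ++ v = w}

theorem isContextFree_nestLang {A B : Set T} (hA : A.Finite) (hB : B.Finite) {L : Language T}
    (hL : L.IsContextFree) : (nestLang A B L).IsContextFree := by
  refine isContextFree_of_isLeast (L := fun _ : Unit => L) (fun _ => hL)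
    (R := insert [.nonterminal (some ())] (Set.image2
      (fun a b => [.terminal a, .nonterminal none, .terminal b]) A B))
    ((hA.image2 _ hB).insert _) ?_
  simp only [IsLeast, lowerBounds, Set.forall_mem_insert, Set.forall_mem_image2, Set.mem_ofPred_eq,
    sententialLang, Option.elim, mul_one]
  refine ⟨⟨fun x hx => ⟨[], by simp, x, hx, [], by simp, by simp⟩, ?_⟩, ?_⟩
  · rintro a ha b hb _ ⟨_, rfl, _, ⟨_, ⟨u, hu, x, hx, v, hv, huv, rfl⟩, _, rfl, rfl⟩, rfl⟩
    refine ⟨a :: u, List.forall_mem_cons.2 ⟨ha, hu⟩, x, hx, v ++ [b],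
      List.forall_mem_append.2 ⟨hv, by simpa⟩, by simp [huv], by simp⟩
  · rintro X ⟨h1, h2⟩ _ ⟨u, hu, x, hx, v, hv, huv, rfl⟩
    induction u generalizing v with
    | nil => simpa [List.length_eq_zero_iff.1 huv.symm] using h1 hx
    | cons a u ih =>
      obtain ⟨v, b, rfl⟩ := List.eq_nil_or_concat' v |>.resolve_left (by rintro rfl; simp at huv)
      rw [mem_wordsOver, List.forall_mem_cons] at hu
      rw [mem_wordsOver, List.forall_mem_append] at hv
      exact h2 a hu.1 b (by simpa using hv.2)
        ⟨[a], rfl, _, ⟨_, ih hu.2 v hv.1 (by simpa using huv), [b], rfl, rfl⟩, by simp⟩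

section Pumping

/-- The sentential form `s` derives `u B z`, where `B` is a nonterminal and the words `u` and `z`
are its context. -/
def DerivesContext (g : ContextFreeGrammar T) (s : List (Symbol T g.NT)) (u : List T) (B : g.NT)
    (z : List T) : Prop :=
  g.Derives s (u.map .terminal ++ .nonterminal B :: z.map .terminal)

namespace DerivesContext

variable {s t : List (Symbol T g.NT)} {A B B' : g.NT} {u u' x z z' : List T}

theorem append (ht : g.Derives t (x.map .terminal)) (h : DerivesContext g s u B z) :
    DerivesContext g (t ++ s) (x ++ u) B z := by
  simpa [DerivesContext] using (ht.append_right s).trans (h.append_left _)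

protected theorem trans (h : DerivesContext g s u B z)
    (h' : DerivesContext g [.nonterminal B] u' B' z') :
    DerivesContext g s (u ++ u') B' (z' ++ z) := by
  have inner := (h'.append_left (u.map .terminal)).append_right (z.map .terminal)
  simpa [DerivesContext] using ContextFreeGrammar.Derives.trans h (by simpa using inner)

theorem mem_derivedLang (h : DerivesContext g [.nonterminal A] u B z) (hx : x ∈ derivedLang g B) :
    u ++ x ++ z ∈ derivedLang g A := by
  have fill := (hx.append_left (u.map .terminal)).append_right (z.map .terminal)
  exact ContextFreeGrammar.Derives.trans h (by simpa using fill)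

theorem iterate_mem_derivedLang (h : DerivesContext g [.nonterminal A] u A z)
    (hx : x ∈ derivedLang g A) (n : ℕ) :
    (List.replicate n u).flatten ++ x ++ (List.replicate n z).flatten ∈ derivedLang g A := by
  induction n with
  | zero => simpa
  | succ n ih =>
    rw [List.replicate_succ, List.replicate_succ']
    simpa using h.mem_derivedLang ih

end DerivesContext

theorem exists_input_eq {A : g.NT} {w : List T} (hw : w ∈ derivedLang g A) :
    ∃ r ∈ g.rules, r.input = A :=
  derivedLang_le (L := fun A => {_w | ∃ r ∈ g.rules, r.input = A})
    (fun r hr _ _ => ⟨r, hr, rfl⟩) A hw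

theorem exists_long_factor_of_mem_sententialLang {L : g.NT → Language T}
    (hL : L ≤ derivedLang g) {t : ℕ} (ht : 0 < t) {s : List (Symbol T g.NT)} {w : List T}
    (hw : w ∈ sententialLang L s) (hlen : s.length * t < w.length) :
    ∃ B u x z, w = u ++ x ++ z ∧ x ∈ L B ∧ t < x.length ∧ DerivesContext g s u B z := by
  induction s generalizing w with
  | nil => simp [(Language.mem_one w).1 hw] at hlen
  | cons a s ih =>
    rw [List.length_cons, Nat.succ_mul] at hlen
    cases a with
    | terminal a =>
      obtain ⟨_, rfl, v, hv, rfl⟩ := hw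
      simp only [List.length_append, List.length_singleton] at hlen
      obtain ⟨B, u, x, z, rfl, hx, htx, hs⟩ := ih hv (by omega)
      exact ⟨B, a :: u, x, z, by simp, hx, htx, hs.append (t := [.terminal a]) (x := [a]) (.refl _)⟩
    | nonterminal A =>
      obtain ⟨y, hy, v, hv, rfl⟩ := hw
      simp only [List.length_append] at hlen
      rcases lt_or_ge t y.length with hty | hty
      · have hs := derives_of_mem_sententialLang (sententialLang_mono hL s hv)
        exact ⟨A, [], y, v, rfl, hy, hty, hs.append_left [.nonterminal A]⟩
      · obtain ⟨B, u, x, z, rfl, hx, htx, hs⟩ := ih hv (by omega)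
        exact ⟨B, y ++ u, x, z, by simp, hx, htx, hs.append (t := [.nonterminal A]) (hL A hy)⟩

/-- The node `q` of a derivation tree, labelled by a nonterminal and its yield, can occur in a
subtree with root `p`. -/
def Dominates (g : ContextFreeGrammar T) (p q : g.NT × List T) : Prop :=
  ∃ u z, p.2 = u ++ q.2 ++ z ∧ DerivesContext g [.nonterminal p.1] u q.1 z

protected theorem Dominates.trans {p q r : g.NT × List T} (hpq : Dominates g p q)
    (hqr : Dominates g q r) : Dominates g p r := by
  obtain ⟨u, z, hp, hpq⟩ := hpq
  obtain ⟨u', z', hq, hqr⟩ := hqr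
  exact ⟨u ++ u', z' ++ z, by simp [hp, hq], hpq.trans hqr⟩

variable {m : ℕ}

/-- Descending to the child with the longest yield divides the length of the yield by at most `m`,
so the lengths met on the way down to a leaf cannot skip the interval `(t, m * t]`. -/
theorem exists_dominates_length_le (hm : ∀ r ∈ g.rules, r.output.length ≤ m) {t : ℕ} (ht : 0 < t)
    {A : g.NT} {w : List T} (hw : w ∈ derivedLang g A) (hlen : m * t < w.length) :
    ∃ B, ∃ x ∈ derivedLang g B, Dominates g (A, w) (B, x) ∧ t < x.length ∧ x.length ≤ m * t := by
  refine (derivedLang_le (L := fun A => {w | w ∈ derivedLang g A ∧ (m * t < w.length → ∃ B,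
    ∃ x ∈ derivedLang g B, Dominates g (A, w) (B, x) ∧ t < x.length ∧ x.length ≤ m * t)})
    (fun r hr v hv => ⟨?_, fun hlen => ?_⟩) A hw).2 hlen
  · exact sententialLang_output_le_derivedLang hr (sententialLang_mono (fun _ _ h => h.1) _ hv)
  · obtain ⟨B, u, x, z, rfl, ⟨hxB, hx⟩, htx, hout⟩ :=
      exists_long_factor_of_mem_sententialLang (fun _ _ h => h.1) ht hv
        ((Nat.mul_le_mul_right t (hm r hr)).trans_lt hlen)
    have hB : Dominates g (r.input, u ++ x ++ z) (B, x) :=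
      ⟨u, z, rfl, (produces_input_output hr).trans_derives hout⟩
    rcases le_or_gt x.length (m * t) with hxt | hxt
    · exact ⟨B, x, hxB, hB, htx, hxt⟩
    · obtain ⟨B', x', hx', hB', h⟩ := hx hxt
      exact ⟨B', x', hx', hB.trans hB', h⟩

theorem exists_pairwise_dominates (hm : ∀ r ∈ g.rules, r.output.length ≤ m) (hm₀ : 0 < m) (n : ℕ)
    {A : g.NT} {w : List T} (hw : w ∈ derivedLang g A) (hlen : m ^ n < w.length) :
    ∃ l : List (g.NT × List T), l.length = n ∧
      l.Pairwise (fun p q => Dominates g p q ∧ q.2.length < p.2.length) ∧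
      ∀ q ∈ l, q.2 ∈ derivedLang g q.1 ∧ Dominates g (A, w) q ∧ q.2.length ≤ m ^ n := by
  induction n generalizing A w with
  | zero => exact ⟨[], by simp⟩
  | succ n ih =>
    have hpow : m ^ n ≤ m ^ (n + 1) := Nat.pow_le_pow_right hm₀ n.le_succ
    rw [pow_succ'] at hlen hpow ⊢
    obtain ⟨B, x, hx, hB, hnx, hxn⟩ := exists_dominates_length_le hm (pow_pos hm₀ n) hw hlen
    obtain ⟨l, hl, hchain, hmem⟩ := ih hx hnx
    refine ⟨(B, x) :: l, by rw [List.length_cons, hl], List.pairwise_cons.2 ⟨?_, hchain⟩,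
      List.forall_mem_cons.2 ⟨⟨hx, hB, hxn⟩, ?_⟩⟩
    · exact fun q hq => ⟨(hmem q hq).2.1, (hmem q hq).2.2.trans_lt hnx⟩
    · exact fun q hq => ⟨(hmem q hq).1, hB.trans (hmem q hq).2.1, (hmem q hq).2.2.trans hpow⟩

theorem exists_rel_map_eq_of_card_lt_length {β γ : Type*} {r : β → β → Prop} {l : List β}
    (hl : l.Pairwise r) {f : β → γ} {F : Finset γ} (hf : ∀ p ∈ l, f p ∈ F)
    (hF : F.card < l.length) : ∃ p ∈ l, ∃ q ∈ l, r p q ∧ f p = f q := by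
  classical
  by_contra! hinj
  have hnodup : (l.map f).Nodup :=
    List.pairwise_map.2 (hl.imp_of_mem fun hp hq h => hinj _ hp _ hq h)
  have hsub : (l.map f).toFinset ⊆ F := fun b hb => by
    obtain ⟨p, hp, rfl⟩ := List.mem_map.1 (List.mem_toFinset.1 hb)
    exact hf p hp
  have hcard := Finset.card_le_card hsub
  rw [List.toFinset_card_of_nodup hnodup, List.length_map] at hcard
  exact hF.not_ge hcard

theorem exists_pumping_length {L : Language T} (hL : L.IsContextFree) :
    ∃ P, ∀ w ∈ L, P ≤ w.length → ∃ u v x y z : List T, w = u ++ (v ++ x ++ y) ++ z ∧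
      (v ++ x ++ y).length ≤ P ∧ 0 < (v ++ y).length ∧
      ∀ n, u ++ ((List.replicate n v).flatten ++ x ++ (List.replicate n y).flatten) ++ z ∈ L := by
  classical
  obtain ⟨g, rfl⟩ := hL
  let m := (g.rules.sup fun r => r.output.length) + 1
  have hm : ∀ r ∈ g.rules, r.output.length ≤ m := fun r hr =>
    (Finset.le_sup (f := fun r => r.output.length) hr).trans (Nat.le_succ _)
  let inputs := g.rules.image ContextFreeRule.input
  refine ⟨m ^ (inputs.card + 1) + 1, fun w hw hlen => ?_⟩
  obtain ⟨l, hl, hchain, hmem⟩ := exists_pairwise_dominates hm (Nat.succ_pos _) _ hw hlen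
  obtain ⟨⟨A, _⟩, hp, ⟨B, x⟩, hq, ⟨⟨v, y, rfl, hA⟩, hlt⟩, rfl : A = B⟩ :=
    exists_rel_map_eq_of_card_lt_length hchain (f := Prod.fst) (F := inputs)
      (fun p hp => Finset.mem_image.2 (exists_input_eq (hmem p hp).1)) (by omega)
  obtain ⟨-, ⟨u, z, rfl, hinitial⟩, hle⟩ := hmem _ hp
  refine ⟨u, v, x, y, z, rfl, hle.trans (Nat.le_succ _), ?_, fun n => ?_⟩
  · simp only [List.length_append] at hlt ⊢
    omega
  · exact hinitial.mem_derivedLang (hA.iterate_mem_derivedLang (hmem _ hq).1 n)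

end Pumping
end ContextFree

section Sufficiency

section Segment

variable {α ι : Type*} (σ : ι → Set α) (C : Set (ι × ι)) {i j : ι} {l l₁ l₂ : List ι}

/-- The analogue of `blockLang` whose blocks are indexed by the entries of the list `l`, where only
the arcs with both endpoints in `l` impose a condition. -/
def segmentLang (l : List ι) : Language α :=
  {w | ∃ B : ι → List α, l.flatMap B = w ∧ (∀ i ∈ l, B i ∈ wordsOver (σ i)) ∧
    ∀ e ∈ C, e.1 ∈ l → e.2 ∈ l → (B e.1).length = (B e.2).length}

theorem segmentLang_nil : segmentLang σ C [] = wordsOver ∅ := by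
  ext w
  constructor
  · rintro ⟨B, rfl, -⟩
    exact List.forall_mem_nil _
  · intro hw
    exact ⟨fun _ => [], (List.eq_nil_iff_forall_not_mem.2 hw).symm, by simp⟩

theorem segmentLang_singleton (i : ι) : segmentLang σ C [i] = wordsOver (σ i) := by
  ext w
  constructor
  · rintro ⟨B, rfl, hB, -⟩
    simpa using hB
  · intro hw
    refine ⟨fun _ => w, by simp, by simpa using hw, by simp⟩

variable {σ C}

theorem segmentLang_append (hl : l₁.Disjoint l₂)
    (hC : ∀ e ∈ C, (e.1 ∈ l₁ → e.2 ∉ l₂) ∧ (e.2 ∈ l₁ → e.1 ∉ l₂)) :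
    segmentLang σ C (l₁ ++ l₂) = segmentLang σ C l₁ * segmentLang σ C l₂ := by
  classical
  ext w
  constructor
  · rintro ⟨B, rfl, hB, hBC⟩
    rw [List.forall_mem_append] at hB
    exact ⟨_, ⟨B, rfl, hB.1, fun e he h₁ h₂ =>
        hBC e he (List.mem_append_left _ h₁) (List.mem_append_left _ h₂)⟩,
      _, ⟨B, rfl, hB.2, fun e he h₁ h₂ =>
        hBC e he (List.mem_append_right _ h₁) (List.mem_append_right _ h₂)⟩,
      List.flatMap_append.symm⟩
  · rintro ⟨_, ⟨B₁, rfl, hB₁, hBC₁⟩, _, ⟨B₂, rfl, hB₂, hBC₂⟩, rfl⟩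
    let B (i : ι) : List α := if i ∈ l₁ then B₁ i else B₂ i
    have eq₁ : ∀ i ∈ l₁, B i = B₁ i := fun i hi => if_pos hi
    have eq₂ : ∀ i ∈ l₂, B i = B₂ i := fun i hi => if_neg (hl.symm hi)
    refine ⟨B, ?_, List.forall_mem_append.2 ⟨fun i hi => eq₁ i hi ▸ hB₁ i hi,
      fun i hi => eq₂ i hi ▸ hB₂ i hi⟩, fun e he h₁ h₂ => ?_⟩
    · rw [List.flatMap_append, List.flatMap_congr eq₁, List.flatMap_congr eq₂]
    · rcases List.mem_append.1 h₁ with h₁ | h₁ <;> rcases List.mem_append.1 h₂ with h₂ | h₂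
      · rw [eq₁ _ h₁, eq₁ _ h₂, hBC₁ e he h₁ h₂]
      · exact absurd h₂ ((hC e he).1 h₁)
      · exact absurd h₁ ((hC e he).2 h₂)
      · rw [eq₂ _ h₁, eq₂ _ h₂, hBC₂ e he h₁ h₂]

theorem segmentLang_cons_concat (hij : (i, j) ∈ C) (hne : i ≠ j) (hi : i ∉ l) (hj : j ∉ l)
    (hC : ∀ e ∈ C, e ≠ (i, j) → e.1 ∉ [i, j] ∧ e.2 ∉ [i, j]) :
    segmentLang σ C (i :: l ++ [j]) = nestLang (σ i) (σ j) (segmentLang σ C l) := by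
  classical
  ext w
  constructor
  · rintro ⟨B, rfl, hB, hBC⟩
    exact ⟨B i, hB i (by simp), _, ⟨B, rfl, fun x hx => hB x (by simp [hx]),
        fun e he h₁ h₂ => hBC e he (by simp [h₁]) (by simp [h₂])⟩,
      B j, hB j (by simp), hBC _ hij (by simp) (by simp), by simp⟩
  · rintro ⟨u, hu, _, ⟨B₀, rfl, hB₀, hBC₀⟩, v, hv, huv, rfl⟩
    let B : ι → List α := Function.update (Function.update B₀ i u) j v
    have eq_i : B i = u := by simp [B, hne]
    have eq_j : B j = v := by simp [B]
    have eq_l : ∀ x ∈ l, B x = B₀ x := fun x hx => by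
      simp [B, ne_of_mem_of_not_mem hx hi, ne_of_mem_of_not_mem hx hj]
    refine ⟨B, ?_, fun x hx => ?_, fun e he h₁ h₂ => ?_⟩
    · simp [eq_i, eq_j, List.flatMap_congr eq_l]
    · simp only [List.cons_append, List.mem_cons, List.mem_append, List.not_mem_nil, or_false] at hx
      rcases hx with rfl | hx | rfl
      · rwa [eq_i]
      · exact eq_l x hx ▸ hB₀ x hx
      · rwa [eq_j]
    · by_cases hne : e = (i, j)
      · rw [hne, eq_i, eq_j, huv]
      · have hC_e := hC e he hne
        simp only [List.mem_cons, List.not_mem_nil, or_false, not_or] at hC_e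
        have h₁ : e.1 ∈ l := by simpa [hC_e.1] using h₁
        have h₂ : e.2 ∈ l := by simpa [hC_e.2] using h₂
        rw [eq_l _ h₁, eq_l _ h₂, hBC₀ e he h₁ h₂]

end Segment

variable {α : Type} {k : ℕ} {σ : Fin k → Set α} {C : Set (Fin k × Fin k)}

theorem segmentLang_finRange (σ : Fin k → Set α) (C : Set (Fin k × Fin k)) :
    segmentLang σ C (List.finRange k) = blockLang σ C := by
  ext w
  refine exists_congr fun B => ?_
  simp [List.flatMap_def, List.ofFn_eq_map, eq_comm]

namespace IsMatching

theorem eq_of_mem_of_mem (hC : IsMatching C) {e e' : Fin k × Fin k} (he : e ∈ C) (he' : e' ∈ C)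
    {x : Fin k} (hx : x ∈ [e.1, e.2]) (hx' : x ∈ [e'.1, e'.2]) : e = e' := by
  by_contra hne
  exact Set.eq_empty_iff_forall_notMem.1 (hC e he e' he' hne) x
    ⟨by simpa using hx, by simpa using hx'⟩

theorem snd_le_of_fst_mem_Icc (hC : IsMatching C) (hwn : WellNested C) {i j : Fin k}
    (hij : (i, j) ∈ C) {e : Fin k × Fin k} (he : e ∈ C) (hi : i ≤ e.1) (hj : e.1 ≤ j) :
    e.2 ≤ j := by
  by_contra! hlt
  have hne : e ≠ (i, j) := by rintro rfl; exact hlt.false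
  have hi' : i ≠ e.1 := fun h => hne (hC.eq_of_mem_of_mem he hij (x := i) (by simp [h]) (by simp))
  have hj' : e.1 ≠ j := fun h => hne (hC.eq_of_mem_of_mem he hij (x := j) (by simp [h]) (by simp))
  exact hwn _ hij _ he (.inl ⟨hi.lt_of_ne hi', hj.lt_of_ne hj', hlt⟩)

end IsMatching

theorem segmentLang_cons_of_mem (hC : IsArcSet C) (hwn : WellNested C) (hm : IsMatching C)
    {i j : Fin k} {l₁ l₂ : List (Fin k)} (hl : (i :: l₁ ++ [j] ++ l₂).Pairwise (· < ·))
    (hij : (i, j) ∈ C) :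
    segmentLang σ C (i :: l₁ ++ [j] ++ l₂) =
      nestLang (σ i) (σ j) (segmentLang σ C l₁) * segmentLang σ C l₂ := by
  obtain ⟨hl', -, hlt⟩ := List.pairwise_append.1 hl
  obtain ⟨hil, -, hlj⟩ := List.pairwise_append.1 hl'
  have lt_j : ∀ x ∈ i :: l₁, x < j := fun x hx => hlj x hx j (by simp)
  have i_le : ∀ x ∈ i :: l₁, i ≤ x := by
    simpa using fun x hx => ((List.pairwise_cons.1 hil).1 x hx).le
  have hle : ∀ x ∈ i :: l₁ ++ [j], i ≤ x ∧ x ≤ j :=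
    List.forall_mem_append.2 ⟨fun x hx => ⟨i_le x hx, (lt_j x hx).le⟩, by
      simpa using (lt_j i (by simp)).le⟩
  rw [segmentLang_append, segmentLang_cons_concat hij (hC _ hij).ne]
  · exact fun hi => ((List.pairwise_cons.1 hil).1 i hi).false
  · exact fun hj => (lt_j j (by simp [hj])).false
  · intro e he hne
    constructor <;> intro h <;> exact hne (hm.eq_of_mem_of_mem he hij (by simp) h)
  · exact fun x hx hx' => (hlt x hx x hx').false
  · refine fun e he => ⟨fun h₁ h₂ => ?_, fun h₂ h₁ => ((hC e he).trans (hlt _ h₂ _ h₁)).false⟩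
    obtain ⟨hi, hj⟩ := hle _ h₁
    exact (hlt j (by simp) _ h₂).not_ge (hm.snd_le_of_fst_mem_Icc hwn hij he hi hj)

theorem isContextFree_segmentLang (hσ : ∀ i, (σ i).Finite) (hC : IsArcSet C)
    (hwn : WellNested C) (hm : IsMatching C) {l : List (Fin k)} (hl : l.Pairwise (· < ·)) :
    (segmentLang σ C l).IsContextFree := by
  induction hn : l.length using Nat.strong_induction_on generalizing l with | _ n ih
  subst hn
  rcases l with _ | ⟨i, t⟩
  · exact segmentLang_nil σ C ▸ isContextFree_wordsOver Set.finite_empty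
  by_cases hi : ∃ j ∈ t, (i, j) ∈ C
  · obtain ⟨j, hj, hij⟩ := hi
    obtain ⟨l₁, l₂, rfl⟩ := List.append_of_mem hj
    have hsplit : i :: (l₁ ++ j :: l₂) = i :: l₁ ++ [j] ++ l₂ := by simp
    rw [hsplit] at hl ⊢
    rw [segmentLang_cons_of_mem hC hwn hm hl hij]
    have hl₁ : l₁.Pairwise (· < ·) := hl.sublist (by simp)
    have hl₂ : l₂.Pairwise (· < ·) := hl.sublist (List.sublist_append_right _ _)
    have hlen : l₁.length < (i :: (l₁ ++ j :: l₂)).length ∧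
        l₂.length < (i :: (l₁ ++ j :: l₂)).length := by
      simp only [List.length_cons, List.length_append]
      omega
    exact isContextFree_mul (isContextFree_nestLang (hσ i) (hσ j) (ih _ hlen.1 hl₁ rfl))
      (ih _ hlen.2 hl₂ rfl)
  · have hi₁ := List.pairwise_cons.1 hl
    rw [← List.singleton_append, segmentLang_append, segmentLang_singleton]
    · exact isContextFree_mul (isContextFree_wordsOver (hσ i)) (ih _ (by simp) hi₁.2 rfl)
    · simpa using fun h => (hi₁.1 i h).false
    · intro e he
      have harc := hC e he
      refine ⟨fun h₁ h₂ => hi ⟨_, h₂, ?_⟩, fun h₁ h₂ => ?_⟩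
      · simpa [← List.mem_singleton.1 h₁] using he
      · exact (harc.trans_eq (List.mem_singleton.1 h₁)).not_gt (hi₁.1 _ h₂)

theorem isContextFree_blockLang (hσ : ∀ i, (σ i).Finite) (hC : IsArcSet C) (hwn : WellNested C)
    (hm : IsMatching C) : (blockLang σ C).IsContextFree :=
  segmentLang_finRange σ C ▸
    isContextFree_segmentLang hσ hC hwn hm (List.pairwise_lt_finRange k)

end Sufficiency

section Necessity

open scoped Function

variable {α : Type} {k : ℕ} {σ : Fin k → Set α} {C C₁ C₂ : Set (Fin k × Fin k)}

open Classical in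
/-- The number of letters of `w` that belong to the sub-alphabet `σ i`. -/
noncomputable def blockCount (σ : Fin k → Set α) (i : Fin k) (w : List α) : ℕ :=
  w.countP (· ∈ σ i)

@[simp]
theorem blockCount_append (i : Fin k) (u v : List α) :
    blockCount σ i (u ++ v) = blockCount σ i u + blockCount σ i v := by
  simp [blockCount]

theorem blockCount_le_length (i : Fin k) (w : List α) : blockCount σ i w ≤ w.length :=
  List.countP_le_length

theorem blockCount_eq_zero {i : Fin k} {w : List α} :
    blockCount σ i w = 0 ↔ ∀ x ∈ w, x ∉ σ i := by
  simp [blockCount]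

theorem blockCount_flatten_ofFn (hσ : Pairwise (Disjoint on σ)) {B : Fin k → List α}
    (hB : ∀ i, ∀ x ∈ B i, x ∈ σ i) (i : Fin k) :
    blockCount σ i (List.ofFn B).flatten = (B i).length := by
  classical
  have hself : blockCount σ i (B i) = (B i).length := by
    simpa [blockCount, List.countP_eq_length] using hB i
  have hother (j : Fin k) (hj : j ≠ i) : blockCount σ i (B j) = 0 :=
    blockCount_eq_zero.2 fun x hx => Set.disjoint_left.1 (hσ hj) (hB j x hx)
  calc blockCount σ i (List.ofFn B).flatten = ∑ j, blockCount σ i (B j) := by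
        simp [blockCount, List.countP_flatten, List.map_ofFn, List.sum_ofFn]
    _ = (B i).length := by rw [Fintype.sum_eq_single i hother, hself]

theorem mem_blockLang_iff (hσ : Pairwise (Disjoint on σ)) {w : List α} :
    w ∈ blockLang σ C ↔
      w ∈ blockLang σ ∅ ∧ ∀ e ∈ C, blockCount σ e.1 w = blockCount σ e.2 w := by
  constructor
  · rintro ⟨B, rfl, hB, hBC⟩
    exact ⟨⟨B, rfl, hB, by simp⟩, by simpa only [blockCount_flatten_ofFn hσ hB]⟩
  · rintro ⟨⟨B, rfl, hB, -⟩, hBC⟩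
    exact ⟨B, rfl, hB, by simpa only [blockCount_flatten_ofFn hσ hB] using hBC⟩

theorem blockLang_inter (hσ : Pairwise (Disjoint on σ)) :
    blockLang σ C₁ ⊓ blockLang σ C₂ = blockLang σ (C₁ ∪ C₂) := by
  ext w
  change w ∈ blockLang σ C₁ ∧ w ∈ blockLang σ C₂ ↔ _
  simp only [mem_blockLang_iff hσ (C := C₁), mem_blockLang_iff hσ (C := C₂),
    mem_blockLang_iff hσ (C := C₁ ∪ C₂), Set.mem_union, or_imp, forall_and]
  tauto

theorem exists_blockCount_ne_zero {w : List α} (hw : w ∈ blockLang σ C) {m : List α} (hm : m ⊆ w)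
    (hpos : 0 < m.length) : ∃ i, blockCount σ i m ≠ 0 := by
  obtain ⟨B, rfl, hB, -⟩ := hw
  obtain ⟨a, ha⟩ := List.exists_mem_of_length_pos hpos
  obtain ⟨_, hi, haB⟩ := List.mem_flatten.1 (hm ha)
  obtain ⟨i, rfl⟩ := List.mem_ofFn.1 hi
  exact ⟨i, fun h => blockCount_eq_zero.1 h a ha (hB i a haB)⟩

theorem pairwise_le_of_mem_blockLang (hσ : Pairwise (Disjoint on σ)) {w : List α}
    (hw : w ∈ blockLang σ C) : w.Pairwise fun a b => ∀ p q, a ∈ σ p → b ∈ σ q → p ≤ q := by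
  obtain ⟨B, rfl, hB, -⟩ := hw
  have index_eq {i p : Fin k} {a : α} (ha : a ∈ B i) (hp : a ∈ σ p) : p = i :=
    hσ.eq (Set.not_disjoint_iff.2 ⟨a, hp, hB i a ha⟩)
  simp only [List.pairwise_flatten, List.forall_mem_ofFn_iff, List.pairwise_ofFn]
  refine ⟨fun i => List.pairwise_of_forall_mem_list fun a ha b hb p q hp hq => ?_,
    fun i j hij a ha b hb p q hp hq => ?_⟩
  · rw [index_eq ha hp, index_eq hb hq]
  · rw [index_eq ha hp, index_eq hb hq]
    exact hij.le

theorem blockCount_le_length_of_between (hσ : Pairwise (Disjoint on σ)) {u m z : List α}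
    (hw : u ++ m ++ z ∈ blockLang σ C) {p q r : Fin k} (hpq : p < q) (hqr : q < r)
    (hp : blockCount σ p m ≠ 0) (hr : blockCount σ r m ≠ 0) :
    blockCount σ q (u ++ m ++ z) ≤ m.length := by
  simp only [ne_eq, blockCount_eq_zero, not_forall, not_not] at hp hr
  obtain ⟨a, ha, hap⟩ := hp
  obtain ⟨c, hc, hcr⟩ := hr
  obtain ⟨hum, -, hmz⟩ := List.pairwise_append.1 (pairwise_le_of_mem_blockLang hσ hw)
  have hu : blockCount σ q u = 0 := blockCount_eq_zero.2 fun b hb hbq =>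
    ((List.pairwise_append.1 hum).2.2 b hb a ha q p hbq hap).not_gt hpq
  have hz : blockCount σ q z = 0 := blockCount_eq_zero.2 fun b hb hbq =>
    (hmz c (by simp [hc]) b hb r q hcr hbq).not_gt hqr
  simpa [hu, hz] using blockCount_le_length q m

/-- Two indices are linked if they are connected by arcs of `C`, so that their blocks are forced to
have the same length. -/
def linked (C : Set (Fin k × Fin k)) : Setoid (Fin k) :=
  Relation.EqvGen.setoid fun i j => (i, j) ∈ C

theorem linked_of_mem {i j : Fin k} (h : (i, j) ∈ C) : linked C i j :=
  .rel i j h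

theorem blockCount_eq_of_linked (hσ : Pairwise (Disjoint on σ)) {w : List α}
    (hw : w ∈ blockLang σ C) {i j : Fin k} (hij : linked C i j) :
    blockCount σ i w = blockCount σ j w :=
  Setoid.eqvGen_le (s := Setoid.ker fun i => blockCount σ i w)
    (fun i j h => ((mem_blockLang_iff hσ).1 hw).2 (i, j) h) hij

theorem exists_mem_blockLang_blockCount_eq (hσ : Pairwise (Disjoint on σ))
    (hne : ∀ i, (σ i).Nonempty) {n : Fin k → ℕ} (hn : ∀ e ∈ C, n e.1 = n e.2) :
    ∃ w ∈ blockLang σ C, ∀ i, blockCount σ i w = n i := by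
  choose a ha using hne
  let B (i : Fin k) : List α := List.replicate (n i) (a i)
  have hB : ∀ i, ∀ x ∈ B i, x ∈ σ i := fun i x hx => (List.mem_replicate.1 hx).2 ▸ ha i
  exact ⟨_, ⟨B, rfl, hB, fun e he => by simp [B, hn e he]⟩,
    fun i => by simp [blockCount_flatten_ofFn hσ hB, B]⟩

theorem not_isContextFree_of_forall_between (hσ : Pairwise (Disjoint on σ))
    (hne : ∀ i, (σ i).Nonempty) {S : Set (Fin k)} (hS : S.Nonempty)
    (hSC : ∀ e ∈ C, e.1 ∈ S ↔ e.2 ∈ S)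
    (hbetween : ∀ l ∈ S, ∃ p q r, q ∈ S ∧ p < q ∧ q < r ∧ linked C p l ∧ linked C r l) :
    ¬ (blockLang σ C).IsContextFree := by
  classical
  intro hCF
  obtain ⟨P, hP⟩ := exists_pumping_length hCF
  obtain ⟨w, hw, hcount⟩ := exists_mem_blockLang_blockCount_eq hσ hne
    (n := fun i => if i ∈ S then P + 1 else 0) (fun e he => by simp only [hSC e he])
  have hlong : ∀ i ∈ S, P < blockCount σ i w := fun i hi => by simp [hcount, hi]
  obtain ⟨i, hi⟩ := hS
  obtain ⟨u, v, x, y, z, rfl, hshort, hpos, hpump⟩ :=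
    hP w hw ((hlong i hi).le.trans (blockCount_le_length i w))
  have hdown : u ++ x ++ z ∈ blockLang σ C := by simpa using hpump 0
  have deleted_eq {i j : Fin k} (hij : linked C i j) :
      blockCount σ i (v ++ y) = blockCount σ j (v ++ y) := by
    have h := blockCount_eq_of_linked hσ hw hij
    have h' := blockCount_eq_of_linked hσ hdown hij
    simp only [blockCount_append] at h h' ⊢
    omega
  have hsub : v ++ y ⊆ u ++ (v ++ x ++ y) ++ z := fun a => by
    simp only [List.mem_append]
    tauto
  obtain ⟨l, hl⟩ := exists_blockCount_ne_zero hw hsub hpos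
  have hlS : l ∈ S := by
    by_contra hlS
    have hcount_l := hcount l
    simp only [blockCount_append, if_neg hlS] at hcount_l hl
    omega
  obtain ⟨p, q, r, hq, hpq, hqr, hp, hr⟩ := hbetween l hlS
  have window {i : Fin k} (hil : linked C i l) : blockCount σ i (v ++ x ++ y) ≠ 0 := by
    have := deleted_eq hil
    simp only [blockCount_append] at this hl ⊢
    omega
  have := blockCount_le_length_of_between hσ hw hpq hqr (window hp) (window hr)
  exact (hlong q hq).not_ge (this.trans hshort)

theorem wellNested_of_isContextFree (hσ : Pairwise (Disjoint on σ)) (hne : ∀ i, (σ i).Nonempty)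
    (hCF : (blockLang σ C).IsContextFree) : WellNested C := by
  suffices h : ∀ e₁ ∈ C, ∀ e₂ ∈ C, e₁.1 < e₂.1 → e₂.1 < e₁.2 → ¬ e₁.2 < e₂.2 by
    rintro e₁ he₁ e₂ he₂ (⟨h₁, h₂, h₃⟩ | ⟨h₁, h₂, h₃⟩)
    exacts [h e₁ he₁ e₂ he₂ h₁ h₂ h₃, h e₂ he₂ e₁ he₁ h₁ h₂ h₃]
  rintro ⟨i, j⟩ hij ⟨i', j'⟩ hij' h₁ h₂ h₃
  have hj := (linked C).symm (linked_of_mem hij)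
  have hj' := (linked C).symm (linked_of_mem hij')
  refine not_isContextFree_of_forall_between hσ hne (S := {l | linked C l i ∨ linked C l i'})
    ⟨i, .inl ((linked C).refl i)⟩ (fun e he => ?_) ?_ hCF
  · have hl := linked_of_mem he
    have hl' := (linked C).symm hl
    exact or_congr ⟨(linked C).trans hl', (linked C).trans hl⟩
      ⟨(linked C).trans hl', (linked C).trans hl⟩
  · rintro l (hl | hl)
    · exact ⟨i, i', j, .inr ((linked C).refl i'), h₁, h₂, (linked C).symm hl,
        (linked C).trans hj ((linked C).symm hl)⟩
    · exact ⟨i', j, j', .inl hj, h₂, h₃, (linked C).symm hl,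
        (linked C).trans hj' ((linked C).symm hl)⟩

theorem not_isContextFree_of_linked (hσ : Pairwise (Disjoint on σ)) (hne : ∀ i, (σ i).Nonempty)
    {a b c : Fin k} (hab : linked C a b) (hcb : linked C c b) (h₁ : a < b) (h₂ : b < c) :
    ¬ (blockLang σ C).IsContextFree := by
  refine not_isContextFree_of_forall_between hσ hne (S := {l | linked C l b})
    ⟨b, (linked C).refl b⟩ (fun e he => ?_) fun l hl => ?_
  · have he := linked_of_mem he
    exact ⟨(linked C).trans ((linked C).symm he), (linked C).trans he⟩
  · exact ⟨a, b, c, (linked C).refl b, h₁, h₂, (linked C).trans hab ((linked C).symm hl),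
      (linked C).trans hcb ((linked C).symm hl)⟩

theorem isMatching_of_isContextFree (hC : IsArcSet C) (hσ : Pairwise (Disjoint on σ))
    (hne : ∀ i, (σ i).Nonempty) (hCF : (blockLang σ C).IsContextFree) : IsMatching C := by
  rintro ⟨i, j⟩ he ⟨i', j'⟩ he' hee'
  by_contra! hshare
  obtain ⟨x, hx, hx'⟩ := hshare
  have hlt : i < j := hC _ he
  have hlt' : i' < j' := hC _ he'
  have linked_x {i j : Fin k} (he : (i, j) ∈ C) (hx : x ∈ ({i, j} : Set (Fin k))) :
      ∀ y ∈ ({i, j} : Set (Fin k)), linked C y x := by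
    have hij := linked_of_mem he
    rcases hx with rfl | rfl <;> rintro _ (rfl | rfl)
    exacts [(linked C).refl _, (linked C).symm hij, hij, (linked C).refl _]
  have not_between {a b c : Fin k} (ha : linked C a x) (hb : linked C b x) (hc : linked C c x)
      (hab : a < b) (hbc : b < c) : False :=
    not_isContextFree_of_linked hσ hne ((linked C).trans ha ((linked C).symm hb))
      ((linked C).trans hc ((linked C).symm hb)) hab hbc hCF
  have hi := linked_x he hx i (by simp)
  have hj := linked_x he hx j (by simp)
  have hi' := linked_x he' hx' i' (by simp)
  have hj' := linked_x he' hx' j' (by simp)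
  have fst_eq : i = i' := by
    rcases lt_trichotomy i i' with h | h | h
    · exact (not_between hi hi' hj' h hlt').elim
    · exact h
    · exact (not_between hi' hi hj h hlt).elim
  have snd_eq : j = j' := by
    rcases lt_trichotomy j j' with h | h | h
    · exact (not_between hi hj hj' hlt h).elim
    · exact h
    · exact (not_between hi' hj' hj hlt' h).elim
  exact hee' (Prod.ext fst_eq snd_eq)

end Necessity

section Characterization

open scoped Function

variable {α : Type} {k : ℕ} {σ : Fin k → Set α} {C C₁ C₂ : Set (Fin k × Fin k)}

theorem isContextFree_blockLang_iff (hσ : Pairwise (Disjoint on σ)) (hfin : ∀ i, (σ i).Finite)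
    (hne : ∀ i, (σ i).Nonempty) (hC : IsArcSet C) :
    (blockLang σ C).IsContextFree ↔ WellNested C ∧ IsMatching C := by
  constructor
  · intro h
    exact ⟨wellNested_of_isContextFree hσ hne h, isMatching_of_isContextFree hC hσ hne h⟩
  · rintro ⟨hwn, hm⟩
    exact isContextFree_blockLang hfin hC hwn hm

theorem wellNested_and_isMatching_union_iff :
    WellNested (C₁ ∪ C₂) ∧ IsMatching (C₁ ∪ C₂) ↔
      JointlyWellNested C₁ C₂ ∧ IsMatching C₁ ∧ IsMatching C₂ := by
  constructor
  · rintro ⟨hwn, hm⟩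
    exact ⟨⟨fun e he e' he' => hwn e (.inl he) e' (.inl he'),
      fun e he e' he' => hwn e (.inr he) e' (.inr he'),
      fun e he e' he' => hwn e (.inl he) e' (.inr he'),
      fun e he e' he' => hm e (.inl he) e' (.inr he')⟩,
      fun e he e' he' => hm e (.inl he) e' (.inl he'),
      fun e he e' he' => hm e (.inr he) e' (.inr he')⟩
  · rintro ⟨⟨hwn₁, hwn₂, hcross, hshare⟩, hm₁, hm₂⟩
    constructor
    · rintro e (he | he) e' (he' | he')
      exacts [hwn₁ e he e' he', hcross e he e' he', fun h => hcross e' he' e he h.symm,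
        hwn₂ e he e' he']
    · rintro e (he | he) e' (he' | he') hne
      exacts [hm₁ e he e' he' hne, hshare e he e' he' hne,
        Set.inter_comm _ _ ▸ hshare e' he' e he hne.symm, hm₂ e he e' he' hne]

theorem blockLang_inter_contextFree_iff_general {α : Type} {k : ℕ} (σ : Fin k → Set α)
    (hdisj : ∀ i j : Fin k, i ≠ j → Disjoint (σ i) (σ j))
    (hfin : ∀ i : Fin k, (σ i).Finite) (hne : ∀ i : Fin k, (σ i).Nonempty)
    (C₁ C₂ : Set (Fin k × Fin k)) (hC₁ : IsArcSet C₁) (hC₂ : IsArcSet C₂) :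
    (blockLang σ C₁ ⊓ blockLang σ C₂).IsContextFree ↔
      JointlyWellNested C₁ C₂ ∧ IsMatching C₁ ∧ IsMatching C₂ := by
  have hσ : Pairwise (Disjoint on σ) := fun i j => hdisj i j
  have hC : IsArcSet (C₁ ∪ C₂) := fun e he => he.elim (hC₁ e) (hC₂ e)
  rw [blockLang_inter hσ, isContextFree_blockLang_iff hσ hfin hne hC,
    wellNested_and_isMatching_union_iff]

end Characterization

/-- Characterization of block-counting CFL intersection: for well-nested matchings `C₁, C₂`,
the intersection of the block-counting languages is context-free iff `C₁, C₂` are jointly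
well-nested. -/
theorem blockLang_inter_contextFree_iff {α : Type} {k : ℕ} (σ : Fin k → Set α)
    (hdisj : ∀ i j : Fin k, i ≠ j → Disjoint (σ i) (σ j))
    (hfin : ∀ i : Fin k, (σ i).Finite) (hne : ∀ i : Fin k, (σ i).Nonempty)
    (C₁ C₂ : Set (Fin k × Fin k))
    (hC₁ : IsArcSet C₁) (hC₂ : IsArcSet C₂)
    (hwn₁ : WellNested C₁) (hwn₂ : WellNested C₂)
    (hm₁ : IsMatching C₁) (hm₂ : IsMatching C₂) :
    (blockLang σ C₁ ⊓ blockLang σ C₂).IsContextFree ↔ JointlyWellNested C₁ C₂ := by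
  simpa only [hm₁, hm₂, and_true] using
    blockLang_inter_contextFree_iff_general σ hdisj hfin hne C₁ C₂ hC₁ hC₂
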